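/- arXiv:2507.07944 — 5 statements merged into one kernel-verified Lean document; each statement's English description precedes it below -/
import Mathlib

section
/- Let H be a Hermitian matrix on ℂ^{n_l}⊗ℂ^{n_w}⊗ℂ^{n_e}, let L_1^e, …, L_M^e be arbitrary n_e×n_e complex matrices, and let 𝓛 be the Lindblad generator with Hamiltonian H and noise operators L_m = 1⊗1⊗L_m^e. Then for every product state ρ_0 = ρ_l ⊗ ρ_w ⊗ ρ_e of density matrices, the initial rate of change of the purity of the reduced logical state vanishes: tr( tr_{we}(𝓛(ρ_0)) · tr_{we}(ρ_0) ) = 0. -/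
/-!
The partial trace over wall and environment is dual to `B ↦ (B ⊗ 1) ⊗ 1` under the trace pairing
(`trace_trWE_mul`), and `tr_{we}(ρ_l ⊗ ρ_w ⊗ ρ_e) = ρ_l` for unit-trace `ρ_w`, `ρ_e`. The claim
therefore says `tr(𝓛(ρ_0) K) = 0` for `K = (ρ_l ⊗ 1) ⊗ 1`. This `K` commutes with the product
state and with every environmental noise operator, and for such `K` cyclicity of the trace makes
the Hamiltonian part and each dissipator vanish separately (`trace_lindblad_mul`).
-/

open Matrix Kronecker
open scoped ComplexOrder

/-- Partial trace over the wall and environment factors. -/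
noncomputable def trWE {nl nw ne : ℕ}
    (ρ : Matrix ((Fin nl × Fin nw) × Fin ne) ((Fin nl × Fin nw) × Fin ne) ℂ) :
    Matrix (Fin nl) (Fin nl) ℂ :=
  fun a a' => ∑ b : Fin nw, ∑ c : Fin ne, ρ ((a, b), c) ((a', b), c)

/-- A density matrix: positive semidefinite with unit trace. -/
def IsDensity {m : Type*} [Fintype m] [DecidableEq m] (ρ : Matrix m m ℂ) : Prop :=
  ρ.PosSemidef ∧ ρ.trace = 1

/-- The Lindblad generator `𝓛(X) = −i[H,X] + Σ_m (L_m X L_m† − ½{L_m†L_m, X})`. -/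
noncomputable def lindblad {ι : Type*} [Fintype ι] {M : ℕ} (H : Matrix ι ι ℂ)
    (L : Fin M → Matrix ι ι ℂ) (X : Matrix ι ι ℂ) :
    Matrix ι ι ℂ :=
  (-Complex.I) • (H * X - X * H) +
    ∑ m : Fin M, (L m * X * (L m)ᴴ -
      (1 / 2 : ℂ) • ((L m)ᴴ * (L m) * X + X * ((L m)ᴴ * (L m))))

/-- The partial trace is dual to `B ↦ (B ⊗ 1) ⊗ 1` with respect to the trace pairing. -/
theorem trace_trWE_mul {nl nw ne : ℕ}
    (A : Matrix ((Fin nl × Fin nw) × Fin ne) ((Fin nl × Fin nw) × Fin ne) ℂ)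
    (B : Matrix (Fin nl) (Fin nl) ℂ) :
    (trWE A * B).trace =
      (A * ((B ⊗ₖ (1 : Matrix (Fin nw) (Fin nw) ℂ)) ⊗ₖ
        (1 : Matrix (Fin ne) (Fin ne) ℂ))).trace := by
  simp only [trace, diag_apply, mul_apply, trWE, Fintype.sum_prod_type, kroneckerMap_apply,
    one_apply, mul_ite, mul_one, mul_zero, Finset.sum_ite_eq', Finset.mem_univ, if_true,
    Finset.sum_mul]
  refine Finset.sum_congr rfl fun a _ => ?_
  rw [Finset.sum_comm]
  refine Finset.sum_congr rfl fun b _ => ?_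
  rw [Finset.sum_comm]

theorem trWE_kronecker {nl nw ne : ℕ} (A : Matrix (Fin nl) (Fin nl) ℂ)
    (B : Matrix (Fin nw) (Fin nw) ℂ) (C : Matrix (Fin ne) (Fin ne) ℂ) :
    trWE ((A ⊗ₖ B) ⊗ₖ C) = (B.trace * C.trace) • A := by
  ext a a'
  simp only [trWE, kroneckerMap_apply, Matrix.smul_apply, smul_eq_mul, trace, diag_apply]
  rw [Finset.sum_mul_sum, Finset.sum_mul]
  simp only [Finset.sum_mul]
  exact Finset.sum_congr rfl fun b _ => Finset.sum_congr rfl fun c _ => by ring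

/-- The expectation of an observable `K` is stationary at `X` as soon as `K` commutes with `X` and
with every noise operator; `K` need not commute with `H`. -/
theorem trace_lindblad_mul {ι : Type*} [Fintype ι] {M : ℕ} (H : Matrix ι ι ℂ)
    (L : Fin M → Matrix ι ι ℂ) (X K : Matrix ι ι ℂ) (hX : X * K = K * X)
    (hL : ∀ m, L m * K = K * L m) : (lindblad H L X * K).trace = 0 := by
  have hH : ((H * X - X * H) * K).trace = 0 := by
    rw [sub_mul, trace_sub, Matrix.mul_assoc H, hX, Matrix.mul_assoc X, trace_mul_comm X,
      Matrix.mul_assoc, sub_self]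
  have hD : ∀ m, ((L m * X * (L m)ᴴ -
      (1 / 2 : ℂ) • ((L m)ᴴ * (L m) * X + X * ((L m)ᴴ * (L m)))) * K).trace = 0 := by
    intro m
    -- All three terms equal `tr(X L† L K)`.
    have h1 : (L m * X * (L m)ᴴ * K).trace = (X * ((L m)ᴴ * L m) * K).trace := by
      rw [Matrix.mul_assoc, Matrix.mul_assoc, trace_mul_comm]
      simp only [Matrix.mul_assoc, hL m]
    have h2 : ((L m)ᴴ * L m * X * K).trace = (X * ((L m)ᴴ * L m) * K).trace := by
      rw [Matrix.mul_assoc, hX, ← Matrix.mul_assoc, trace_mul_comm, ← Matrix.mul_assoc]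
    rw [sub_mul, trace_sub, smul_mul, trace_smul, add_mul, trace_add, h1, h2, smul_eq_mul]
    ring
  rw [lindblad, add_mul, trace_add, smul_mul, trace_smul, hH, Finset.sum_mul, trace_sum]
  simp only [hD, smul_zero, Finset.sum_const_zero, add_zero]

/-- **Vanishing initial purity loss rate.** For Lindblad dynamics with arbitrary
Hermitian Hamiltonian and purely environmental noise operators, any factorized
initial state `ρ_0 = ρ_l ⊗ ρ_w ⊗ ρ_e` has vanishing initial purity derivative:
`tr( tr_{we}(𝓛(ρ_0)) · tr_{we}(ρ_0) ) = 0`. -/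
theorem initial_purity_rate_eq_zero {nl nw ne M : ℕ}
    (H : Matrix ((Fin nl × Fin nw) × Fin ne) ((Fin nl × Fin nw) × Fin ne) ℂ)
    (hH : H.IsHermitian)
    (Le : Fin M → Matrix (Fin ne) (Fin ne) ℂ)
    (ρl : Matrix (Fin nl) (Fin nl) ℂ) (ρw : Matrix (Fin nw) (Fin nw) ℂ)
    (ρe : Matrix (Fin ne) (Fin ne) ℂ)
    (hρl : IsDensity ρl) (hρw : IsDensity ρw) (hρe : IsDensity ρe) :
    ((trWE (lindblad H
        (fun m => ((1 : Matrix (Fin nl) (Fin nl) ℂ) ⊗ₖ (1 : Matrix (Fin nw) (Fin nw) ℂ)) ⊗ₖ Le m)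
        ((ρl ⊗ₖ ρw) ⊗ₖ ρe)))
      * trWE ((ρl ⊗ₖ ρw) ⊗ₖ ρe)).trace = 0 := by
  have hK : trWE ((ρl ⊗ₖ ρw) ⊗ₖ ρe) = ρl := by
    rw [trWE_kronecker, hρw.2, hρe.2, one_mul, one_smul]
  rw [hK, trace_trWE_mul]
  apply trace_lindblad_mul
  · simp only [← mul_kronecker_mul, Matrix.mul_one, Matrix.one_mul]
  · intro m
    simp only [← mul_kronecker_mul, Matrix.mul_one, Matrix.one_mul]
end

section
/- Let n ≥ 1 and let μ_n be the unitarily invariant Borel probability measure on the unit sphere of ℂⁿ. Then for all traceless Hermitian n×n complex matrices A and B, ∫ tr( A |ψ⟩⟨ψ| B |ψ⟩⟨ψ| ) dμ_n(ψ) = tr(AB) / (n(n+1)); equivalently, ∫ ⟨ψ, Aψ⟩·⟨ψ, Bψ⟩ dμ_n(ψ) = tr(AB)/(n(n+1)). In particular, for an orthonormal family of traceless Hermitian matrices σ_i (tr(σ_i σ_a) = δ_{ia}), the average of tr(σ_i ρ σ_a ρ) over uniformly distributed pure states ρ = |ψ⟩⟨ψ| is δ_{ia}/(n(n+1)). -/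
open Matrix MeasureTheory

/-!
The trace is the quartic polynomial `∑ A j i * B l k * (ψ i * conj (ψ j) * ψ k * conj (ψ l))`, so
everything reduces to the fourth moments `E[ψ i * conj (ψ j) * ψ k * conj (ψ l)]` of `μ`.  These are
`c * (δ_ij δ_kl + δ_il δ_jk)` with `c = 1 / (n (n + 1))` (`moment_eq`), and for traceless `A`, `B`
only the second term survives, contributing `c * tr (A * B)`.

Two kinds of unitaries, both of the form `1 - (1 - I) P` with `P` an orthogonal projection, determine
the moments.  Multiplying one coordinate by `I` shows that a moment vanishes unless `{i, k} = {j, l}`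
as multisets (`moment_eq_zero`).  Mixing two coordinates `i ≠ k` gives
`4 E|ψ i|⁴ = E|ψ i|⁴ + E|ψ k|⁴ + 4 E|ψ i|²|ψ k|²` (`moment_mix`), so that all `E|ψ i|⁴` agree and
equal twice each `E|ψ i|²|ψ k|²`.  The common value is fixed by integrating `(∑ |ψ i|²)² = 1`.
-/

/-- The quartic monomial `ψ i * conj (ψ j) * ψ k * conj (ψ l)`. -/
def quartic {n : ℕ} (i j k l : Fin n) (ψ : Fin n → ℂ) : ℂ :=
  ψ i * star (ψ j) * (ψ k * star (ψ l))

lemma continuous_quartic {n : ℕ} (i j k l : Fin n) : Continuous (quartic i j k l) := by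
  unfold quartic
  fun_prop

lemma integrable_quartic {n : ℕ} {μ : Measure (Fin n → ℂ)} [IsProbabilityMeasure μ]
    (hsupp : μ {ψ : Fin n → ℂ | ∑ i, ‖ψ i‖ ^ 2 = 1}ᶜ = 0) (i j k l : Fin n) :
    Integrable (quartic i j k l) μ := by
  refine Integrable.of_bound (continuous_quartic i j k l).aestronglyMeasurable 1 ?_
  have h : ∀ᵐ ψ ∂μ, ∑ i, ‖ψ i‖ ^ 2 = 1 := hsupp
  filter_upwards [h] with ψ hψ
  have hb : ∀ p, ‖ψ p‖ ≤ 1 := fun p => by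
    have := Finset.single_le_sum (f := fun i => ‖ψ i‖ ^ 2) (fun i _ => sq_nonneg _)
      (Finset.mem_univ p)
    exact (sq_le_one_iff₀ (norm_nonneg _)).1 (by simpa [hψ] using this)
  simp only [quartic, norm_mul, norm_star]
  exact mul_le_one₀ (mul_le_one₀ (hb i) (norm_nonneg _) (hb j)) (by positivity)
    (mul_le_one₀ (hb k) (norm_nonneg _) (hb l))

/-- For an orthogonal projection `P`, the matrix `1 - (1 - I) P` is unitary: it is `I` on the range
of `P` and `1` on its orthogonal complement. -/
lemma one_sub_smul_mem_unitaryGroup {n : ℕ} {P : Matrix (Fin n) (Fin n) ℂ}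
    (hP : P.IsHermitian) (hPP : P * P = P) :
    1 - (1 - Complex.I) • P ∈ Matrix.unitaryGroup (Fin n) ℂ := by
  rw [Matrix.mem_unitaryGroup_iff, Matrix.star_eq_conjTranspose]
  have hI : (1 - Complex.I) * (1 + Complex.I) = 2 := by
    linear_combination -Complex.I_mul_I
  simp only [conjTranspose_sub, conjTranspose_one, conjTranspose_smul, hP.eq, star_sub, star_one,
    Complex.star_def, Complex.conj_I, sub_neg_eq_add, sub_mul, mul_sub, one_mul, mul_one,
    smul_mul_smul_comm, hPP, hI]
  module

lemma integral_comp_mulVec {n : ℕ} {μ : Measure (Fin n → ℂ)}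
    (hinv : ∀ U ∈ Matrix.unitaryGroup (Fin n) ℂ, Measure.map (fun ψ => Matrix.mulVec U ψ) μ = μ)
    {U : Matrix (Fin n) (Fin n) ℂ} (hU : U ∈ Matrix.unitaryGroup (Fin n) ℂ)
    (i j k l : Fin n) :
    ∫ ψ, quartic i j k l (U *ᵥ ψ) ∂μ = ∫ ψ, quartic i j k l ψ ∂μ := by
  conv_rhs => rw [← hinv U hU]
  refine (integral_map ?_ (continuous_quartic i j k l).aestronglyMeasurable).symm
  exact (Continuous.measurable (by fun_prop)).aemeasurable

lemma phase_mem {n : ℕ} (p : Fin n) :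
    1 - (1 - Complex.I) • Matrix.single p p (1 : ℂ) ∈ Matrix.unitaryGroup (Fin n) ℂ :=
  one_sub_smul_mem_unitaryGroup (by simp [Matrix.IsHermitian]) (by simp)

lemma phase_mulVec {n : ℕ} (p : Fin n) (ψ : Fin n → ℂ) (q : Fin n) :
    ((1 - (1 - Complex.I) • Matrix.single p p (1 : ℂ)) *ᵥ ψ) q
      = if q = p then Complex.I * ψ q else ψ q := by
  simp only [sub_mulVec, one_mulVec, smul_mulVec, single_mulVec, Pi.sub_apply, Pi.smul_apply,
    Function.update_apply, Pi.zero_apply, smul_eq_mul]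
  split_ifs with h
  · subst h; ring
  · ring

/-- A moment vanishes unless each coordinate occurs equally often with and without conjugation:
multiplying the coordinate `p` by `I` multiplies the moment by a power of `I` that is not `1`. -/
lemma moment_eq_zero {n : ℕ} {μ : Measure (Fin n → ℂ)}
    (hinv : ∀ U ∈ Matrix.unitaryGroup (Fin n) ℂ, Measure.map (fun ψ => Matrix.mulVec U ψ) μ = μ)
    {i j k l : Fin n} (h1 : ¬ (i = j ∧ k = l)) (h2 : ¬ (i = l ∧ k = j)) :
    ∫ ψ, quartic i j k l ψ ∂μ = 0 := by
  let w : Fin n → Fin n → ℂ := fun p q => if q = p then Complex.I else 1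
  have key : ∀ p, w p i * star (w p j) * (w p k * star (w p l)) ≠ 1 →
      ∫ ψ, quartic i j k l ψ ∂μ = 0 := by
    intro p hp
    have h := integral_comp_mulVec hinv (phase_mem p) i j k l
    have h' : ∀ ψ : Fin n → ℂ,
        quartic i j k l ((1 - (1 - Complex.I) • Matrix.single p p (1 : ℂ)) *ᵥ ψ)
        = w p i * star (w p j) * (w p k * star (w p l)) * quartic i j k l ψ := by
      intro ψ
      have hw : ∀ q, ((1 - (1 - Complex.I) • Matrix.single p p (1 : ℂ)) *ᵥ ψ) q
          = w p q * ψ q := by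
        intro q
        rw [phase_mulVec]
        simp only [w]
        split_ifs <;> ring
      simp only [quartic, hw, star_mul']
      ring
    simp only [h', integral_const_mul] at h
    have : (w p i * star (w p j) * (w p k * star (w p l)) - 1) * ∫ ψ, quartic i j k l ψ ∂μ = 0 := by
      linear_combination h
    exact (mul_eq_zero.1 this).resolve_left (sub_ne_zero.2 hp)
  have hI1 : Complex.I ≠ 1 := fun h => by simpa using congrArg Complex.re h
  have hI2 : -Complex.I ≠ 1 := fun h => by simpa using congrArg Complex.re h
  have hI3 : (-1 : ℂ) ≠ 1 := by norm_num
  -- Some index occurs on only one of the two sides `{i, k}`, `{j, l}`.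
  by_cases hi : i = j ∨ i = l
  · by_cases hk : k = j ∨ k = l
    · rcases hi with rfl | rfl
      · have hkl : k ≠ l := fun h => h1 ⟨rfl, h⟩
        obtain rfl : k = i := hk.resolve_right hkl
        exact key l (by simp [w, hkl, hI2])
      · have hkj : k ≠ j := fun h => h2 ⟨rfl, h⟩
        obtain rfl : k = i := hk.resolve_left hkj
        exact key j (by simp [w, hkj, hI2])
    · push Not at hk
      by_cases hki : i = k
      · exact key k (by simp [w, hk.1.symm, hk.2.symm, hki, hI3])
      · exact key k (by simp [w, hk.1.symm, hk.2.symm, hki, hI1])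
  · push Not at hi
    by_cases hki : k = i
    · exact key i (by simp [w, hi.1.symm, hi.2.symm, hki, hI3])
    · exact key i (by simp [w, hi.1.symm, hi.2.symm, hki, hI1])

/-- The projection onto the line spanned by `e_i + e_k` yields a unitary mixing the coordinates
`i` and `k`. -/
lemma mix_mem {n : ℕ} {i k : Fin n} (h : i ≠ k) :
    1 - (1 - Complex.I) • ((1 / 2 : ℂ) • Matrix.vecMulVec (Pi.single i 1 + Pi.single k 1)
      (Pi.single i 1 + Pi.single k 1)) ∈ Matrix.unitaryGroup (Fin n) ℂ := by
  refine one_sub_smul_mem_unitaryGroup ?_ ?_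
  · have hs : ∀ p : Fin n, star (Pi.single p (1 : ℂ) : Fin n → ℂ) = Pi.single p 1 := fun p => by
      rw [← Pi.single_star, star_one]
    simp [Matrix.IsHermitian, conjTranspose_smul, conjTranspose_vecMulVec, hs]
  · have hd : (Pi.single i 1 + Pi.single k 1 : Fin n → ℂ) ⬝ᵥ (Pi.single i 1 + Pi.single k 1) = 2 := by
      simp [h, h.symm]
      norm_num
    rw [smul_mul_smul_comm, vecMulVec_mul_vecMulVec, hd, vecMulVec_smul, smul_smul]
    norm_num

lemma mix_mulVec {n : ℕ} {i k : Fin n} (h : i ≠ k) (ψ : Fin n → ℂ) :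
    ((1 - (1 - Complex.I) • ((1 / 2 : ℂ) • Matrix.vecMulVec (Pi.single i 1 + Pi.single k 1)
      (Pi.single i 1 + Pi.single k 1))) *ᵥ ψ) i
      = ((1 + Complex.I) * ψ i - (1 - Complex.I) * ψ k) / 2 := by
  simp [sub_mulVec, smul_mulVec, vecMulVec_mulVec, h]
  ring

lemma moment_mix {n : ℕ} {μ : Measure (Fin n → ℂ)} [IsProbabilityMeasure μ]
    (hsupp : μ {ψ : Fin n → ℂ | ∑ i, ‖ψ i‖ ^ 2 = 1}ᶜ = 0)
    (hinv : ∀ U ∈ Matrix.unitaryGroup (Fin n) ℂ, Measure.map (fun ψ => Matrix.mulVec U ψ) μ = μ)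
    {i k : Fin n} (h : i ≠ k) :
    4 * ∫ ψ, quartic i i i i ψ ∂μ = ∫ ψ, quartic i i i i ψ ∂μ + ∫ ψ, quartic k k k k ψ ∂μ
      + 4 * ∫ ψ, quartic i i k k ψ ∂μ := by
  have e := integral_comp_mulVec hinv (mix_mem h) i i i i
  -- Up to a phase the new coordinate is `(ψ i + I * ψ k) / √2`.
  have hexp : ∀ ψ : Fin n → ℂ, quartic i i i i ((1 - (1 - Complex.I) • ((1 / 2 : ℂ) •
      Matrix.vecMulVec (Pi.single i 1 + Pi.single k 1) (Pi.single i 1 + Pi.single k 1))) *ᵥ ψ)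
      = (1 / 4 : ℂ) * quartic i i i i ψ + (1 / 4 : ℂ) * quartic k k k k ψ + 1 * quartic i i k k ψ
        + (-Complex.I / 2) * quartic i i i k ψ + (Complex.I / 2) * quartic i i k i ψ
        + (-1 / 4) * quartic i k i k ψ + (-1 / 4) * quartic k i k i ψ
        + (-Complex.I / 2) * quartic i k k k ψ + (Complex.I / 2) * quartic k i k k ψ := by
    intro ψ
    have hI := Complex.I_sq
    have hI3 : Complex.I ^ 3 = -Complex.I := by rw [pow_succ, hI]; ring
    have hI4 : Complex.I ^ 4 = 1 := Complex.I_pow_four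
    have hstar : star (((1 + Complex.I) * ψ i - (1 - Complex.I) * ψ k) / 2)
        = ((1 - Complex.I) * star (ψ i) - (1 + Complex.I) * star (ψ k)) / 2 := by
      simp only [star_div₀, star_sub, star_mul', star_add, star_one, star_ofNat,
        Complex.star_def, Complex.conj_I]
      ring
    simp only [quartic, mix_mulVec h, hstar]
    ring_nf
    simp only [hI, hI3, hI4]
    ring
  have hint := fun a b c d => integrable_quartic hsupp a b c d
  have hc := fun (z : ℂ) a b c d => (integrable_quartic hsupp a b c d).const_mul z
  simp only [hexp] at e
  iterate 8 rw [integral_add (by fun_prop (disch := assumption)) (hc _ _ _ _ _)] at e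
  simp only [integral_const_mul] at e
  rw [moment_eq_zero hinv (i := i) (j := i) (k := i) (l := k) (by grind) (by grind),
    moment_eq_zero hinv (i := i) (j := i) (k := k) (l := i) (by grind) (by grind),
    moment_eq_zero hinv (i := i) (j := k) (k := i) (l := k) (by grind) (by grind),
    moment_eq_zero hinv (i := k) (j := i) (k := k) (l := i) (by grind) (by grind),
    moment_eq_zero hinv (i := i) (j := k) (k := k) (l := k) (by grind) (by grind),
    moment_eq_zero hinv (i := k) (j := i) (k := k) (l := k) (by grind) (by grind)] at e
  linear_combination -4 * e

lemma sum_moment {n : ℕ} {μ : Measure (Fin n → ℂ)} [IsProbabilityMeasure μ]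
    (hsupp : μ {ψ : Fin n → ℂ | ∑ i, ‖ψ i‖ ^ 2 = 1}ᶜ = 0) :
    ∑ i, ∑ k, ∫ ψ, quartic i i k k ψ ∂μ = 1 := by
  have h : ∀ᵐ ψ ∂μ, ∑ i, ‖ψ i‖ ^ 2 = 1 := hsupp
  have hint := fun a b c d => integrable_quartic hsupp a b c d
  calc ∑ i, ∑ k, ∫ ψ, quartic i i k k ψ ∂μ = ∫ ψ, ∑ i, ∑ k, quartic i i k k ψ ∂μ := by
        rw [integral_finsetSum _ fun i _ => integrable_finsetSum _ fun k _ => hint i i k k]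
        exact Finset.sum_congr rfl fun i _ =>
          (integral_finsetSum _ fun k _ => hint i i k k).symm
    _ = ∫ _, (1 : ℂ) ∂μ := by
        refine integral_congr_ae ?_
        filter_upwards [h] with ψ hψ
        have hs : ∑ i, ψ i * star (ψ i) = 1 := by
          have := congrArg (fun x : ℝ => (x : ℂ)) hψ
          simpa [Complex.mul_conj'] using this
        simp only [quartic, ← Finset.mul_sum, hs, mul_one]
    _ = 1 := by simp

/-- The fourth moments of a unitarily invariant probability measure on the unit sphere. -/
lemma moment_eq {n : ℕ} {μ : Measure (Fin n → ℂ)} [IsProbabilityMeasure μ]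
    (hsupp : μ {ψ : Fin n → ℂ | ∑ i, ‖ψ i‖ ^ 2 = 1}ᶜ = 0)
    (hinv : ∀ U ∈ Matrix.unitaryGroup (Fin n) ℂ, Measure.map (fun ψ => Matrix.mulVec U ψ) μ = μ)
    (i j k l : Fin n) :
    ∫ ψ, quartic i j k l ψ ∂μ = 1 / ((n : ℂ) * ((n : ℂ) + 1)) *
      ((if i = j ∧ k = l then 1 else 0) + (if i = l ∧ k = j then 1 else 0)) := by
  have hcomm : ∀ a b, ∫ ψ, quartic a a b b ψ ∂μ = ∫ ψ, quartic b b a a ψ ∂μ := fun a b => by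
    congr 1; ext ψ; simp only [quartic]; ring
  obtain ⟨c, hpair⟩ : ∃ c : ℂ, ∀ a b, ∫ ψ, quartic a a b b ψ ∂μ
      = c * (1 + if a = b then 1 else 0) := by
    refine ⟨(∫ ψ, quartic i i i i ψ ∂μ) / 2, ?_⟩
    have hdiag : ∀ a, ∫ ψ, quartic a a a a ψ ∂μ = ∫ ψ, quartic i i i i ψ ∂μ := by
      intro a
      by_cases h : a = i
      · rw [h]
      · have h1 := moment_mix hsupp hinv h
        have h2 := moment_mix hsupp hinv (Ne.symm h)
        rw [hcomm a i] at h1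
        linear_combination (h1 - h2) / 4
    intro a b
    by_cases h : a = b
    · subst h
      rw [hdiag a, if_pos rfl]
      ring
    · have h1 := moment_mix hsupp hinv h
      rw [hdiag a, hdiag b] at h1
      rw [if_neg h]
      linear_combination -h1 / 4
  have hnorm := sum_moment hsupp
  simp only [hpair, ← Finset.mul_sum, Finset.sum_add_distrib] at hnorm
  simp only [Finset.sum_const, Finset.card_univ, Fintype.card_fin, Finset.sum_ite_eq,
    Finset.mem_univ, if_true, nsmul_eq_mul, mul_one] at hnorm
  have hn : (n : ℂ) * ((n : ℂ) + 1) ≠ 0 := by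
    have := i.pos
    exact_mod_cast (by positivity : n * (n + 1) ≠ 0)
  have hval : c = 1 / ((n : ℂ) * ((n : ℂ) + 1)) := by
    rw [eq_div_iff hn]
    linear_combination hnorm
  rw [hval] at hpair
  by_cases h1 : i = j ∧ k = l
  · obtain ⟨rfl, rfl⟩ := h1
    rw [hpair]
    by_cases h : i = k <;> simp [h]
  · by_cases h2 : i = l ∧ k = j
    · obtain ⟨rfl, rfl⟩ := h2
      have : ∫ ψ, quartic i k k i ψ ∂μ = ∫ ψ, quartic i i k k ψ ∂μ := by
        congr 1; ext ψ; simp only [quartic]; ring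
      rw [this, hpair]
      by_cases h : i = k <;> simp_all
    · rw [moment_eq_zero hinv h1 h2, if_neg h1, if_neg h2]
      ring

lemma trace_sandwich {n : ℕ} (A B : Matrix (Fin n) (Fin n) ℂ) (ψ : Fin n → ℂ) :
    (A * Matrix.vecMulVec ψ (star ψ) * B * Matrix.vecMulVec ψ (star ψ)).trace
      = ∑ i, ∑ j, ∑ k, ∑ l, A j i * B l k * quartic i j k l ψ := by
  have h : ∀ M : Matrix (Fin n) (Fin n) ℂ,
      star ψ ⬝ᵥ (M *ᵥ ψ) = ∑ i, ∑ j, M j i * (ψ i * star (ψ j)) := by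
    intro M
    simp only [dotProduct, mulVec, Finset.mul_sum, Pi.star_apply]
    rw [Finset.sum_comm]
    exact Finset.sum_congr rfl fun i _ => Finset.sum_congr rfl fun j _ => by ring
  have h2 : (A * Matrix.vecMulVec ψ (star ψ) * B * Matrix.vecMulVec ψ (star ψ)).trace
      = (star ψ ⬝ᵥ (A *ᵥ ψ)) * (star ψ ⬝ᵥ (B *ᵥ ψ)) := by
    rw [Matrix.mul_assoc (A * _), mul_vecMulVec, mul_vecMulVec, vecMulVec_mul_vecMulVec,
      trace_vecMulVec, dotProduct_smul, smul_eq_mul, dotProduct_comm (A *ᵥ ψ)]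
    ring
  rw [h2, h, h]
  simp only [Finset.sum_mul]
  refine Finset.sum_congr rfl fun i _ => Finset.sum_congr rfl fun j _ => ?_
  simp only [Finset.mul_sum, quartic]
  exact Finset.sum_congr rfl fun k _ => Finset.sum_congr rfl fun l _ => by ring

/-- **Second-order pure state averages.** If `μ` is a unitarily invariant Borel
probability measure supported on the unit sphere of `ℂⁿ`, then for all traceless
Hermitian matrices `A`, `B` one has
`∫ tr(A |ψ⟩⟨ψ| B |ψ⟩⟨ψ|) dμ(ψ) = tr(AB)/(n(n+1))`.  In particular, for an
orthonormal family of traceless Hermitian `σ_i`, the average of `tr(σ_i ρ σ_a ρ)`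
over pure states `ρ = |ψ⟩⟨ψ|` is `δ_{ia}/(n(n+1))`. -/
theorem sphere_avg_sandwich {n : ℕ} (hn : 0 < n)
    (μ : Measure (Fin n → ℂ)) [IsProbabilityMeasure μ]
    (hsupp : μ {ψ : Fin n → ℂ | ∑ i, ‖ψ i‖ ^ 2 = 1}ᶜ = 0)
    (hinv : ∀ U ∈ Matrix.unitaryGroup (Fin n) ℂ,
      Measure.map (fun ψ => Matrix.mulVec U ψ) μ = μ)
    (A B : Matrix (Fin n) (Fin n) ℂ)
    (hA : A.IsHermitian) (hB : B.IsHermitian)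
    (hAtr : A.trace = 0) (hBtr : B.trace = 0) :
    ∫ ψ, (A * Matrix.vecMulVec ψ (star ψ) * B * Matrix.vecMulVec ψ (star ψ)).trace ∂μ
      = (A * B).trace / ((n : ℂ) * ((n : ℂ) + 1)) := by
  have hint := fun i j k l => (integrable_quartic hsupp i j k l).const_mul (A j i * B l k)
  simp only [trace_sandwich]
  rw [integral_finsetSum _ fun i _ => integrable_finsetSum _ fun j _ =>
    integrable_finsetSum _ fun k _ => integrable_finsetSum _ fun l _ => hint i j k l]
  have hterm : ∀ i, ∫ ψ, ∑ j, ∑ k, ∑ l, A j i * B l k * quartic i j k l ψ ∂μ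
      = 1 / ((n : ℂ) * ((n : ℂ) + 1)) * (A i i * B.trace + ∑ j, A j i * B i j) := by
    intro i
    rw [integral_finsetSum _ fun j _ => integrable_finsetSum _ fun k _ =>
      integrable_finsetSum _ fun l _ => hint i j k l]
    have hj : ∀ j, ∫ ψ, ∑ k, ∑ l, A j i * B l k * quartic i j k l ψ ∂μ
        = 1 / ((n : ℂ) * ((n : ℂ) + 1)) *
          ((if i = j then A j i * B.trace else 0) + A j i * B i j) := by
      intro j
      rw [integral_finsetSum _ fun k _ => integrable_finsetSum _ fun l _ => hint i j k l]
      simp_rw [integral_finsetSum _ fun l _ => hint i j _ l, integral_const_mul,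
        moment_eq hsupp hinv, mul_left_comm (A j i * B _ _), ← Finset.mul_sum]
      congr 1
      simp only [mul_add, Finset.sum_add_distrib, ite_and]
      congr 1
      · split_ifs <;> simp [Matrix.trace, Finset.mul_sum]
      · simp
    simp_rw [hj, ← Finset.mul_sum, Finset.sum_add_distrib]
    simp
  simp_rw [hterm, ← Finset.mul_sum, Finset.sum_add_distrib, hBtr]
  have htr : ∑ i, ∑ j, A j i * B i j = (A * B).trace := by
    rw [Finset.sum_comm]
    simp [Matrix.trace, Matrix.mul_apply]
  rw [htr]
  simp only [mul_zero, Finset.sum_const_zero, zero_add]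
  ring
end

section
/- Let D₁, D₂, D₃ be 2×2 complex Hermitian matrices with tr(D_i) = 0 and tr(D_i D_j) = δ_{ij} for all i,j ∈ {1,2,3}, and let s₁, s₂, s₃ ∈ ℝ. Define Γ₂(ψ) = Σ_{i=1}^{3} s_i² ( ⟨ψ, D_i²ψ⟩ − ⟨ψ, D_iψ⟩² ) for unit vectors ψ ∈ ℂ². Then for every j ∈ {1,2,3} and every unit eigenvector ψ of D_j, Γ₂(ψ) = (s₁² + s₂² + s₃² − s_j²)/2. -/
/-!
By polarised Cayley–Hamilton, traceless `2×2` matrices satisfy `A B + B A = tr(A B) • 1`. Hence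
`Dᵢ² = 1/2` for every `i`, and `Dᵢ`, `Dⱼ` anticommute for `i ≠ j`. If `Dⱼ ψ = λ ψ` with `ψ` a unit
vector, then `λ` is real and `λ² = 1/2`, so the variance of `Dⱼ` vanishes. For `i ≠ j`,
anticommutation gives `0 = ⟨ψ, (Dᵢ Dⱼ + Dⱼ Dᵢ) ψ⟩ = 2 λ ⟨ψ, Dᵢ ψ⟩`, so `⟨ψ, Dᵢ ψ⟩ = 0` and the
variance of `Dᵢ` is `1/2`.
-/

open Matrix

/-- Cayley–Hamilton for `2×2` matrices of trace zero, in polarised form. -/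
lemma mul_add_mul_of_trace_zero (A B : Matrix (Fin 2) (Fin 2) ℂ)
    (hA : A.trace = 0) (hB : B.trace = 0) :
    A * B + B * A = (A * B).trace • (1 : Matrix (Fin 2) (Fin 2) ℂ) := by
  rw [Matrix.trace_fin_two] at hA hB
  have hA' : A 1 1 = -A 0 0 := by linear_combination hA
  have hB' : B 1 1 = -B 0 0 := by linear_combination hB
  ext a b
  fin_cases a <;> fin_cases b <;>
    simp [Matrix.mul_apply, Fin.sum_univ_two, Matrix.trace_fin_two, hA', hB'] <;> ring

lemma star_dotProduct_mulVec_of_isHermitian {A : Matrix (Fin 2) (Fin 2) ℂ} (hA : A.IsHermitian)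
    (v w : Fin 2 → ℂ) : star v ⬝ᵥ A.mulVec w = star (A.mulVec v) ⬝ᵥ w := by
  rw [Matrix.star_mulVec, hA.eq, Matrix.dotProduct_mulVec]

/-- **Value of the wall cost function on eigenstates.** For an orthonormal family
`D₁,D₂,D₃` of traceless Hermitian `2×2` matrices, the variance functional
`Γ₂(ψ) = Σᵢ sᵢ² (⟨ψ,Dᵢ²ψ⟩ − ⟨ψ,Dᵢψ⟩²)` evaluated on any unit eigenvector `ψ`
of `D_j` equals `(s₁² + s₂² + s₃² − s_j²)/2`. -/
theorem qubit_cost_on_eigvec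
    (D : Fin 3 → Matrix (Fin 2) (Fin 2) ℂ) (s : Fin 3 → ℝ)
    (hD : ∀ i, (D i).IsHermitian)
    (htr : ∀ i, (D i).trace = 0)
    (hON : ∀ i j, (D i * D j).trace = if i = j then 1 else 0)
    (j : Fin 3) (ψ : Fin 2 → ℂ) (hψ : star ψ ⬝ᵥ ψ = 1)
    (heig : ∃ lam : ℂ, (D j).mulVec ψ = lam • ψ) :
    (∑ i : Fin 3, ((s i : ℂ) ^ 2) *
        ((star ψ ⬝ᵥ (D i * D i).mulVec ψ) - (star ψ ⬝ᵥ (D i).mulVec ψ) ^ 2))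
      = (((s 0 ^ 2 + s 1 ^ 2 + s 2 ^ 2 - s j ^ 2) / 2 : ℝ) : ℂ) := by
  obtain ⟨lam, hl⟩ := heig
  have hsq : ∀ i, star ψ ⬝ᵥ (D i * D i).mulVec ψ = 1 / 2 := by
    intro i
    have h := congrArg (fun M => star ψ ⬝ᵥ M.mulVec ψ)
      (mul_add_mul_of_trace_zero (D i) (D i) (htr i) (htr i))
    simp only [hON, if_true, one_smul, Matrix.add_mulVec, dotProduct_add, Matrix.one_mulVec,
      hψ] at h
    linear_combination h / 2
  have hm : star ψ ⬝ᵥ (D j).mulVec ψ = lam := by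
    rw [hl, dotProduct_smul, hψ, smul_eq_mul, mul_one]
  have hreal : star lam = lam := by
    have h := star_dotProduct_mulVec_of_isHermitian (hD j) ψ ψ
    rw [hm, hl, star_smul, smul_dotProduct, hψ, smul_eq_mul, mul_one] at h
    exact h.symm
  have hlam : lam ^ 2 = 1 / 2 := by
    have h := hsq j
    rw [← Matrix.mulVec_mulVec, hl, Matrix.mulVec_smul, hl, dotProduct_smul, dotProduct_smul,
      hψ] at h
    simp only [smul_eq_mul] at h
    linear_combination h
  have hlam0 : lam ≠ 0 := by
    rintro rfl
    norm_num at hlam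
  have hoff : ∀ i, i ≠ j → star ψ ⬝ᵥ (D i).mulVec ψ = 0 := by
    intro i hij
    have h := congrArg (fun M => star ψ ⬝ᵥ M.mulVec ψ)
      (mul_add_mul_of_trace_zero (D i) (D j) (htr i) (htr j))
    simp only [hON, if_neg hij, zero_smul, Matrix.add_mulVec, dotProduct_add, Matrix.zero_mulVec,
      dotProduct_zero, ← Matrix.mulVec_mulVec] at h
    rw [star_dotProduct_mulVec_of_isHermitian (hD j), hl, star_smul, hreal, smul_dotProduct,
      Matrix.mulVec_smul, dotProduct_smul, smul_eq_mul] at h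
    have h2 : lam * (star ψ ⬝ᵥ (D i).mulVec ψ) = 0 := by linear_combination h / 2
    exact (mul_eq_zero.mp h2).resolve_left hlam0
  have hterm : ∀ i, (star ψ ⬝ᵥ (D i * D i).mulVec ψ) - (star ψ ⬝ᵥ (D i).mulVec ψ) ^ 2
      = if i = j then 0 else 1 / 2 := by
    intro i
    rw [hsq]
    split_ifs with h
    · rw [h, hm, hlam, sub_self]
    · rw [hoff i h]; ring
  simp only [hterm, Fin.sum_univ_three]
  push_cast
  fin_cases j <;> simp <;> ring
end

section
/- Let D₁, D₂, D₃ be 2×2 complex Hermitian matrices with tr(D_i) = 0 and tr(D_i D_j) = δ_{ij} for all i,j ∈ {1,2,3}, and let s₁, s₂, s₃ ≥ 0 with s₁ > s₂ and s₁ > s₃. Define Γ₂(ψ) = Σ_{i=1}^{3} s_i² ( ⟨ψ, D_i²ψ⟩ − ⟨ψ, D_iψ⟩² ) for unit vectors ψ ∈ ℂ². Then every unit eigenvector w of D₁ satisfies: (i) Γ₂(w) ≤ Γ₂(v) for every unit vector v that is an eigenvector of D₁, D₂, or D₃; and (ii) w is a local minimizer of Γ₂ on the unit sphere of ℂ²,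 i.e. there exists δ > 0 such that Γ₂(w) ≤ Γ₂(v) for every unit vector v with ‖v − w‖ < δ. -/
/-!
In fact `w` is a global minimizer of `Γ₂` on the unit sphere. A traceless `2×2` matrix satisfies
`A² = (tr A² / 2) • 1` by Cayley–Hamilton, so `Dᵢ² = 1/2` and
`Γ₂(ψ) = ∑ sᵢ² (1/2 - mᵢ²)` with `mᵢ = ⟨ψ, Dᵢ ψ⟩` (`Gamma2_eq`). The Bloch vector satisfies
`∑ mᵢ² ≤ 1/2` (`sum_sq_expectation_le`), hence `∑ sᵢ² mᵢ² ≤ s₀² / 2` because `s₀` is the largest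
weight. An eigenvector of `D 0` has eigenvalue `λ` with `λ² = 1/2`, so `m₀² = 1/2` there and the
bound is attained.
-/

open Matrix

/-- The variance cost functional `Γ₂(ψ) = Σᵢ sᵢ² (⟨ψ,Dᵢ²ψ⟩ − ⟨ψ,Dᵢψ⟩²)`
(real-valued, since the `Dᵢ` are Hermitian). -/
noncomputable def Gamma2 (D : Fin 3 → Matrix (Fin 2) (Fin 2) ℂ) (s : Fin 3 → ℝ)
    (ψ : Fin 2 → ℂ) : ℝ :=
  (∑ i : Fin 3, ((s i : ℂ) ^ 2) *
      ((star ψ ⬝ᵥ (D i * D i).mulVec ψ) - (star ψ ⬝ᵥ (D i).mulVec ψ) ^ 2)).re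

/-- Cayley–Hamilton for a traceless `2×2` matrix. -/
lemma mul_self_of_trace_eq_zero (A : Matrix (Fin 2) (Fin 2) ℂ) (h : A.trace = 0) :
    A * A = ((A * A).trace / 2) • (1 : Matrix (Fin 2) (Fin 2) ℂ) := by
  rw [Matrix.trace_fin_two] at h
  have h' : A 1 1 = -A 0 0 := by linear_combination h
  ext i j
  fin_cases i <;> fin_cases j <;>
    simp [Matrix.trace_fin_two, Matrix.mul_apply, Fin.sum_univ_two, h'] <;> ring

lemma mul_self_eq_half (D : Fin 3 → Matrix (Fin 2) (Fin 2) ℂ)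
    (htr : ∀ i, (D i).trace = 0)
    (hON : ∀ i j, (D i * D j).trace = if i = j then 1 else 0) (i : Fin 3) :
    D i * D i = (1 / 2 : ℂ) • (1 : Matrix (Fin 2) (Fin 2) ℂ) := by
  rw [mul_self_of_trace_eq_zero _ (htr i), hON, if_pos rfl]

/-- The expectation value of a Hermitian matrix is real. -/
lemma expectation_eq_re (A : Matrix (Fin 2) (Fin 2) ℂ) (hA : A.IsHermitian) (ψ : Fin 2 → ℂ) :
    star ψ ⬝ᵥ A.mulVec ψ = (((star ψ ⬝ᵥ A.mulVec ψ).re : ℝ) : ℂ) := by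
  apply Complex.ext
  · simp
  · simpa using hA.im_star_dotProduct_mulVec_self ψ

lemma Gamma2_eq (D : Fin 3 → Matrix (Fin 2) (Fin 2) ℂ) (s : Fin 3 → ℝ)
    (hD : ∀ i, (D i).IsHermitian) (htr : ∀ i, (D i).trace = 0)
    (hON : ∀ i j, (D i * D j).trace = if i = j then 1 else 0)
    (ψ : Fin 2 → ℂ) (hψ : star ψ ⬝ᵥ ψ = 1) :
    Gamma2 D s ψ = ∑ i, s i ^ 2 * (1 / 2 - (star ψ ⬝ᵥ (D i).mulVec ψ).re ^ 2) := by
  unfold Gamma2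
  rw [← Complex.ofReal_re (∑ i, s i ^ 2 * (1 / 2 - (star ψ ⬝ᵥ (D i).mulVec ψ).re ^ 2))]
  congr 1
  push_cast
  refine Finset.sum_congr rfl fun i _ => ?_
  rw [mul_self_eq_half D htr hON, ← expectation_eq_re _ (hD i) ψ, Matrix.smul_mulVec,
    Matrix.one_mulVec, dotProduct_smul, hψ]
  simp

/-- The Bloch vector `m` of a unit vector satisfies `∑ mᵢ² ≤ 1/2`: with `M = ∑ mᵢ Dᵢ` one has
`M² = (∑ mᵢ²) / 2` and `⟨ψ, M ψ⟩ = ∑ mᵢ²`, so `0 ≤ ‖(1 - 2M)ψ‖² = 1 - 2 ∑ mᵢ²`. -/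
lemma sum_sq_expectation_le (D : Fin 3 → Matrix (Fin 2) (Fin 2) ℂ)
    (hD : ∀ i, (D i).IsHermitian) (htr : ∀ i, (D i).trace = 0)
    (hON : ∀ i j, (D i * D j).trace = if i = j then 1 else 0)
    (ψ : Fin 2 → ℂ) (hψ : star ψ ⬝ᵥ ψ = 1) :
    ∑ i, (star ψ ⬝ᵥ (D i).mulVec ψ).re ^ 2 ≤ 1 / 2 := by
  set m : Fin 3 → ℝ := fun i => (star ψ ⬝ᵥ (D i).mulVec ψ).re with hm
  have hmc : ∀ i, star ψ ⬝ᵥ (D i).mulVec ψ = (m i : ℂ) := fun i => expectation_eq_re _ (hD i) ψ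
  change ∑ i, m i ^ 2 ≤ 1 / 2
  set M : Matrix (Fin 2) (Fin 2) ℂ := ∑ i, (m i : ℂ) • D i with hM
  have hMH : M.conjTranspose = M := by
    simp [hM, Matrix.conjTranspose_sum, Matrix.conjTranspose_smul, fun i => (hD i).eq]
  have hMtr : M.trace = 0 := by simp [hM, Matrix.trace_sum, htr]
  have hMM : (M * M).trace = ((∑ i, m i ^ 2 : ℝ) : ℂ) := by
    simp [hM, Finset.sum_mul, Finset.mul_sum, Matrix.trace_sum, hON, pow_two]
  have hMe : star ψ ⬝ᵥ M.mulVec ψ = ((∑ i, m i ^ 2 : ℝ) : ℂ) := by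
    simp only [hM, Matrix.sum_mulVec, dotProduct_sum, Matrix.smul_mulVec, dotProduct_smul, hmc,
      smul_eq_mul, pow_two, Complex.ofReal_sum, Complex.ofReal_mul]
  have hsq : M.mulVec (M.mulVec ψ) = (((∑ i, m i ^ 2 : ℝ) : ℂ) / 2) • ψ := by
    rw [Matrix.mulVec_mulVec, mul_self_of_trace_eq_zero M hMtr, hMM, Matrix.smul_mulVec,
      Matrix.one_mulVec]
  have hsa : ∀ u : Fin 2 → ℂ, star (M.mulVec ψ) ⬝ᵥ u = star ψ ⬝ᵥ M.mulVec u := fun u => by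
    rw [Matrix.star_mulVec, hMH, ← Matrix.dotProduct_mulVec]
  have key : star (ψ - (2 : ℂ) • M.mulVec ψ) ⬝ᵥ (ψ - (2 : ℂ) • M.mulVec ψ)
      = ((1 - 2 * ∑ i, m i ^ 2 : ℝ) : ℂ) := by
    rw [star_sub, star_smul, sub_dotProduct, dotProduct_sub, smul_dotProduct, dotProduct_sub,
      dotProduct_smul, dotProduct_smul, hsa, hsa, hsq, dotProduct_smul, hMe, hψ]
    simp only [smul_eq_mul, RCLike.star_def, map_ofNat]
    push_cast
    ring
  have hpos : 0 ≤ (star (ψ - (2 : ℂ) • M.mulVec ψ) ⬝ᵥ (ψ - (2 : ℂ) • M.mulVec ψ)).re := by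
    simp only [dotProduct, Fin.sum_univ_two, Pi.star_apply, RCLike.star_def,
      ← Complex.normSq_eq_conj_mul_self, Complex.add_re, Complex.ofReal_re]
    exact add_nonneg (Complex.normSq_nonneg _) (Complex.normSq_nonneg _)
  rw [key, Complex.ofReal_re] at hpos
  linarith

/-- Eigenvectors of `D 0` saturate the Bloch bound in the first coordinate. -/
lemma sq_expectation_of_eigenvector (D : Fin 3 → Matrix (Fin 2) (Fin 2) ℂ)
    (hD : ∀ i, (D i).IsHermitian) (htr : ∀ i, (D i).trace = 0)
    (hON : ∀ i j, (D i * D j).trace = if i = j then 1 else 0)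
    (w : Fin 2 → ℂ) (hw : star w ⬝ᵥ w = 1) (heig : ∃ lam : ℂ, (D 0).mulVec w = lam • w) :
    (star w ⬝ᵥ (D 0).mulVec w).re ^ 2 = 1 / 2 := by
  obtain ⟨lam, h⟩ := heig
  have h1 : star w ⬝ᵥ (D 0).mulVec w = lam := by simp [h, hw]
  have h2 : star w ⬝ᵥ (D 0 * D 0).mulVec w = lam ^ 2 := by
    rw [← Matrix.mulVec_mulVec, h, Matrix.mulVec_smul, h]
    simp [hw, pow_two]
  rw [mul_self_eq_half D htr hON, Matrix.smul_mulVec, Matrix.one_mulVec, dotProduct_smul, hw,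
    ← h1, expectation_eq_re _ (hD 0) w, smul_eq_mul, mul_one] at h2
  have h3 : ((1 / 2 : ℝ) : ℂ) = (((star w ⬝ᵥ (D 0).mulVec w).re ^ 2 : ℝ) : ℂ) := by
    push_cast
    exact h2
  exact (Complex.ofReal_injective h3).symm

/-- **Optimality of the dominant eigenvectors** (Proposition 6 of the paper).
For an orthonormal family `D₁,D₂,D₃` of traceless Hermitian `2×2` matrices and
weights `s₁ > s₂, s₃ ≥ 0`, every unit eigenvector `w` of `D₁` minimizes `Γ₂`
over all unit eigenvectors of `D₁`, `D₂`, `D₃`, and is a local minimizer of `Γ₂`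
on the unit sphere of `ℂ²`. -/
theorem qubit_optimal_wall_state
    (D : Fin 3 → Matrix (Fin 2) (Fin 2) ℂ) (s : Fin 3 → ℝ)
    (hD : ∀ i, (D i).IsHermitian)
    (htr : ∀ i, (D i).trace = 0)
    (hON : ∀ i j, (D i * D j).trace = if i = j then 1 else 0)
    (hs : ∀ i, 0 ≤ s i) (hs1 : s 1 < s 0) (hs2 : s 2 < s 0)
    (w : Fin 2 → ℂ) (hw : star w ⬝ᵥ w = 1)
    (heig : ∃ lam : ℂ, (D 0).mulVec w = lam • w) :
    (∀ v : Fin 2 → ℂ, star v ⬝ᵥ v = 1 →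
      (∃ i : Fin 3, ∃ lam : ℂ, (D i).mulVec v = lam • v) →
      Gamma2 D s w ≤ Gamma2 D s v) ∧
    (∃ δ > 0, ∀ v : Fin 2 → ℂ, star v ⬝ᵥ v = 1 →
      Real.sqrt (∑ i, ‖v i - w i‖ ^ 2) < δ →
      Gamma2 D s w ≤ Gamma2 D s v) := by
  have hglob : ∀ v : Fin 2 → ℂ, star v ⬝ᵥ v = 1 → Gamma2 D s w ≤ Gamma2 D s v := by
    intro v hv
    have hB := sum_sq_expectation_le D hD htr hON v hv
    have hW := sq_expectation_of_eigenvector D hD htr hON w hw heig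
    rw [Gamma2_eq D s hD htr hON w hw, Gamma2_eq D s hD htr hON v hv]
    simp only [Fin.sum_univ_three] at hB ⊢
    rw [hW]
    have h1 : s 1 ^ 2 ≤ s 0 ^ 2 := pow_le_pow_left₀ (hs 1) hs1.le 2
    have h2 : s 2 ^ 2 ≤ s 0 ^ 2 := pow_le_pow_left₀ (hs 2) hs2.le 2
    have e0 := mul_le_mul_of_nonneg_left hB (sq_nonneg (s 0))
    have e1 := mul_le_mul_of_nonneg_right h1 (sq_nonneg (star v ⬝ᵥ (D 1).mulVec v).re)
    have e2 := mul_le_mul_of_nonneg_right h2 (sq_nonneg (star v ⬝ᵥ (D 2).mulVec v).re)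
    have f1 := mul_nonneg (sq_nonneg (s 1)) (sq_nonneg (star w ⬝ᵥ (D 1).mulVec w).re)
    have f2 := mul_nonneg (sq_nonneg (s 2)) (sq_nonneg (star w ⬝ᵥ (D 2).mulVec w).re)
    linarith
  exact ⟨fun v hv _ => hglob v hv, 1, one_pos, fun v hv _ => hglob v hv⟩
end

section
/- Let H_0 be a Hermitian matrix on ℂ^{n_l}⊗ℂ^{n_w}⊗ℂ^{n_e} and let H_u be a Hermitian n_w×n_w matrix with n_w distinct eigenvalues (nondegenerate), with K = 1⊗H_u⊗1. Suppose (κ_n) is a sequence of reals with κ_n → ∞, (ψ_n) is a sequence of unit vectors with (H_0 + κ_n K) ψ_n = μ_n ψ_n for some reals μ_n, and ψ_n → ψ. Then: (1) ψ is a unit eigenvector of K; (2) there is an eigenvector w_b of H_u such that ψ lies in the subspace ℂ^{n_l} ⊗ span{w_b} ⊗ ℂ^{n_e} (i.e. the wall factor of ψ is the unentangled eigenstate w_b); and (3) ⟨ψ_n, H_0 ψ_n⟩ → ⟨ψ, H_0 ψ⟩, i.e. the eigenvalue splitting widths μ_n − κ_n ⟨ψ_n, K ψ_n⟩-type shifts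 induced by H_0 converge to ⟨ψ, H_0 ψ⟩. -/
open Matrix Kronecker Filter

/-!
Write `h_n = ⟨ψ_n, H_0 ψ_n⟩` and `k_n = ⟨ψ_n, K ψ_n⟩`. Pairing the eigenvector equation with the unit
vector `ψ_n` gives `μ_n = h_n + κ_n k_n`, so that
`K ψ_n - k_n ψ_n = -κ_n⁻¹ (H_0 ψ_n - h_n ψ_n)`.
The right side tends to zero, as its second factor converges, so the limit satisfies
`K ψ = ⟨ψ, K ψ⟩ ψ` (`mulVec_limit_eq_expectation_smul`).

Since `K = 1 ⊗ H_u ⊗ 1` acts slice by slice in the wall index, every slice `b ↦ ψ ((a, b), c)` lies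
in the same eigenspace of `H_u`. A nonzero slice makes the eigenvalue one of the `λ_i` of `H_u`, and
nondegeneracy makes that eigenspace the line through the `i`-th eigenvector
(`eq_smul_eigenvectorBasis`).
-/

/-- The limit of unit eigenvectors of `A + κ_n B`, with `κ_n → ∞`, is an eigenvector of `B`;
its eigenvalue is the expectation of `B`. -/
lemma mulVec_limit_eq_expectation_smul {m : Type*} [Fintype m] (A B : Matrix m m ℂ)
    (κ : ℕ → ℝ) (hκ : Tendsto κ atTop atTop) (x : ℕ → m → ℂ) (μ : ℕ → ℂ)
    (hunit : ∀ n, star (x n) ⬝ᵥ x n = 1)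
    (heig : ∀ n, (A + (κ n : ℂ) • B) *ᵥ x n = μ n • x n)
    (y : m → ℂ) (hlim : Tendsto x atTop (nhds y)) :
    B *ᵥ y = (star y ⬝ᵥ B *ᵥ y) • y := by
  -- The residual of `v` as an eigenvector of `M`, a continuous function of `v`.
  have hcont : ∀ M : Matrix m m ℂ,
      Continuous fun v : m → ℂ => M *ᵥ v - (star v ⬝ᵥ M *ᵥ v) • v := by
    intro M
    fun_prop
  have hA := ((hcont A).tendsto y).comp hlim
  have hB := ((hcont B).tendsto y).comp hlim
  have hinv : Tendsto (fun n => -((κ n : ℂ)⁻¹)) atTop (nhds 0) := by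
    have h := (Complex.continuous_ofReal.tendsto 0).comp hκ.inv_tendsto_atTop
    simpa [Function.comp_def] using h.neg
  have hzero := hinv.smul hA
  rw [zero_smul] at hzero
  have key : ∀ᶠ n in atTop,
      -((κ n : ℂ)⁻¹) • (A *ᵥ x n - (star (x n) ⬝ᵥ A *ᵥ x n) • x n) =
        B *ᵥ x n - (star (x n) ⬝ᵥ B *ᵥ x n) • x n := by
    filter_upwards [hκ.eventually_gt_atTop 0] with n hn
    have hκ0 : (κ n : ℂ) ≠ 0 := by exact_mod_cast hn.ne'
    have he := heig n
    rw [add_mulVec, smul_mulVec] at he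
    have hμ := congrArg (fun v => star (x n) ⬝ᵥ v) he
    simp only [dotProduct_add, dotProduct_smul, hunit n, smul_eq_mul, mul_one] at hμ
    ext j
    have hj := congrFun he j
    simp only [Pi.add_apply, Pi.smul_apply, Pi.sub_apply, smul_eq_mul] at hj ⊢
    rw [← hμ] at hj
    field_simp
    linear_combination -hj
  exact sub_eq_zero.mp (tendsto_nhds_unique hB (hzero.congr' key))

/-- Pairing an eigenvector `v` with the `i`-th basis eigenvector shows that `v` has no component
along it unless the two eigenvalues agree. -/
lemma inner_eigenvectorBasis_eq_zero {n : ℕ} {H : Matrix (Fin n) (Fin n) ℂ} (hH : H.IsHermitian)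
    {ν : ℂ} {v : Fin n → ℂ} (hv : H *ᵥ v = ν • v) (i : Fin n) (hi : ν ≠ hH.eigenvalues i) :
    inner ℂ (hH.eigenvectorBasis i) (WithLp.toLp 2 v) = 0 := by
  rw [EuclideanSpace.inner_eq_star_dotProduct, dotProduct_comm]
  have hu := hH.mulVec_eigenvectorBasis i
  have h1 : star (hH.eigenvectorBasis i).ofLp ⬝ᵥ H *ᵥ v =
      (hH.eigenvalues i : ℂ) * (star (hH.eigenvectorBasis i).ofLp ⬝ᵥ v) := by
    have hstar := star_mulVec H (hH.eigenvectorBasis i).ofLp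
    rw [hH.eq, hu] at hstar
    rw [dotProduct_mulVec, ← hstar, star_smul, smul_dotProduct]
    simp
  rw [hv, dotProduct_smul, smul_eq_mul] at h1
  have h2 := sub_eq_zero.mpr h1
  rw [← sub_mul] at h2
  exact (mul_eq_zero.mp h2).resolve_left (sub_ne_zero.mpr hi)

lemma exists_eq_eigenvalue {n : ℕ} {H : Matrix (Fin n) (Fin n) ℂ} (hH : H.IsHermitian)
    {ν : ℂ} {v : Fin n → ℂ} (hv : H *ᵥ v = ν • v) (hv0 : v ≠ 0) :
    ∃ i, ν = hH.eigenvalues i := by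
  by_contra! hne
  apply hv0
  have h := hH.eigenvectorBasis.sum_repr' (WithLp.toLp 2 v)
  simp only [inner_eigenvectorBasis_eq_zero hH hv _ (hne _), zero_smul,
    Finset.sum_const_zero] at h
  exact (congrArg WithLp.ofLp h).symm

/-- Eigenspaces of a nondegenerate Hermitian matrix are lines. -/
lemma eq_smul_eigenvectorBasis {n : ℕ} {H : Matrix (Fin n) (Fin n) ℂ} (hH : H.IsHermitian)
    (hinj : Function.Injective hH.eigenvalues) (i : Fin n) {v : Fin n → ℂ}
    (hv : H *ᵥ v = (hH.eigenvalues i : ℂ) • v) :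
    v = inner ℂ (hH.eigenvectorBasis i) (WithLp.toLp 2 v) • (hH.eigenvectorBasis i).ofLp := by
  have h := hH.eigenvectorBasis.sum_repr' (WithLp.toLp 2 v)
  rw [Finset.sum_eq_single i] at h
  · exact (congrArg WithLp.ofLp h).symm
  · intro j _ hj
    rw [inner_eigenvectorBasis_eq_zero hH hv j, zero_smul]
    exact fun hij => hj (hinj (by exact_mod_cast hij.symm))
  · simp

lemma one_kronecker_one_mulVec_apply {nl nw ne : ℕ} (H : Matrix (Fin nw) (Fin nw) ℂ)
    (ψ : ((Fin nl × Fin nw) × Fin ne) → ℂ) (a : Fin nl) (b : Fin nw) (c : Fin ne) :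
    ((((1 : Matrix (Fin nl) (Fin nl) ℂ) ⊗ₖ H) ⊗ₖ (1 : Matrix (Fin ne) (Fin ne) ℂ)) *ᵥ ψ)
      ((a, b), c) = (H *ᵥ fun b' => ψ ((a, b'), c)) b := by
  simp [mulVec, dotProduct, Fintype.sum_prod_type, one_apply, ite_mul, mul_ite]

/-- **Asymptotic eigenvectors under strong wall driving** (Lemma 8 of the
paper).  Let `K = 1⊗H_u⊗1` with `H_u` Hermitian and nondegenerate.  If unit
eigenvectors `ψ_n` of `H_0 + κ_n K` converge to `ψ` while `κ_n → ∞`, then `ψ`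
is a unit eigenvector of `K`, its wall factor is an unentangled eigenstate of
`H_u`, and the energy shifts `⟨ψ_n, H_0 ψ_n⟩` converge to `⟨ψ, H_0 ψ⟩`. -/
theorem strong_driving_asymptotic_eigenvectors {nl nw ne : ℕ}
    (H0 : Matrix ((Fin nl × Fin nw) × Fin ne) ((Fin nl × Fin nw) × Fin ne) ℂ)
    (hH0 : H0.IsHermitian)
    (Hu : Matrix (Fin nw) (Fin nw) ℂ) (hHu : Hu.IsHermitian)
    (hnondeg : Function.Injective hHu.eigenvalues)
    (κ : ℕ → ℝ) (hκ : Tendsto κ atTop atTop)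
    (ψn : ℕ → ((Fin nl × Fin nw) × Fin ne) → ℂ) (μn : ℕ → ℝ)
    (hunit : ∀ n, star (ψn n) ⬝ᵥ ψn n = 1)
    (heig : ∀ n,
      (H0 + (κ n : ℂ) •
          (((1 : Matrix (Fin nl) (Fin nl) ℂ) ⊗ₖ Hu) ⊗ₖ (1 : Matrix (Fin ne) (Fin ne) ℂ))).mulVec
        (ψn n) = ((μn n : ℝ) : ℂ) • ψn n)
    (ψ : ((Fin nl × Fin nw) × Fin ne) → ℂ)
    (hlim : Tendsto ψn atTop (nhds ψ)) :
    (star ψ ⬝ᵥ ψ = 1 ∧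
      ∃ ν : ℂ,
        (((1 : Matrix (Fin nl) (Fin nl) ℂ) ⊗ₖ Hu) ⊗ₖ
            (1 : Matrix (Fin ne) (Fin ne) ℂ)).mulVec ψ = ν • ψ) ∧
    (∃ (wb : Fin nw → ℂ) (νb : ℝ), wb ≠ 0 ∧ Hu.mulVec wb = (νb : ℂ) • wb ∧
      ∃ α : Fin nl → Fin ne → ℂ, ∀ a b c, ψ ((a, b), c) = α a c * wb b) ∧
    Tendsto (fun n => star (ψn n) ⬝ᵥ H0.mulVec (ψn n)) atTop
      (nhds (star ψ ⬝ᵥ H0.mulVec ψ)) := by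
  have hcontinner : ∀ M : Matrix ((Fin nl × Fin nw) × Fin ne) ((Fin nl × Fin nw) × Fin ne) ℂ,
      Continuous fun v : ((Fin nl × Fin nw) × Fin ne) → ℂ => star v ⬝ᵥ M *ᵥ v := by
    intro M
    fun_prop
  have hnorm : star ψ ⬝ᵥ ψ = 1 := by
    have hc : Continuous fun v : ((Fin nl × Fin nw) × Fin ne) → ℂ => star v ⬝ᵥ v := by fun_prop
    have h := (hc.tendsto ψ).comp hlim
    simp only [Function.comp_def, hunit] at h
    exact tendsto_nhds_unique h tendsto_const_nhds
  have hK := mulVec_limit_eq_expectation_smul H0 _ κ hκ ψn (fun n => (μn n : ℂ)) hunit heig ψ hlim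
  obtain ⟨ν, hν⟩ : ∃ ν : ℂ, (((1 : Matrix (Fin nl) (Fin nl) ℂ) ⊗ₖ Hu) ⊗ₖ
      (1 : Matrix (Fin ne) (Fin ne) ℂ)) *ᵥ ψ = ν • ψ := ⟨_, hK⟩
  refine ⟨⟨hnorm, ν, hν⟩, ?_, ((hcontinner H0).tendsto ψ).comp hlim⟩
  have hslice : ∀ a c, Hu *ᵥ (fun b => ψ ((a, b), c)) = ν • fun b => ψ ((a, b), c) := by
    intro a c
    ext b
    rw [← one_kronecker_one_mulVec_apply, hν]
    rfl
  obtain ⟨⟨⟨a, b⟩, c⟩, hne⟩ : ∃ p, ψ p ≠ 0 := by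
    by_contra! h
    have h0 : ψ = 0 := funext h
    simp [h0] at hnorm
  obtain ⟨i, rfl⟩ := exists_eq_eigenvalue hHu (hslice a c) (fun h => hne (congrFun h b))
  refine ⟨(hHu.eigenvectorBasis i).ofLp, hHu.eigenvalues i, ?_, ?_,
    fun a c => inner ℂ (hHu.eigenvectorBasis i) (WithLp.toLp 2 fun b => ψ ((a, b), c)), ?_⟩
  · intro h
    exact hHu.eigenvectorBasis.orthonormal.ne_zero i ((WithLp.ofLp_eq_zero 2).mp h)
  · exact hHu.mulVec_eigenvectorBasis i
  · intro a b c
    exact congrFun (eq_smul_eigenvectorBasis hHu hnondeg i (hslice a c)) b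
end
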